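/- arXiv:1106.4662 — 2 statements merged into one kernel-verified Lean document; each statement's English description precedes it below -/
import Mathlib

section
/- Suppose that for every j ∈ {1,…,M} we have 2|(Z_n)_j| ≤ ŵ_j, and let β̂ be a minimizer over a convex set B ⊆ ℝ^M of the penalized criterion b ↦ R_n(b) + 2 pen(b). Let β ∈ B, write J = J(β), and let μ > 0 be such that |b_J|_2 ≤ μ ‖h_b‖_n for every b ∈ ℝ^M with |b_{J^∁}|_{1,ŵ} ≤ 3 |b_J|_{1,ŵ}. Then ‖h_{β̂} − h_0‖_n² ≤ ‖h_β − h_0‖_n² + (9/4) μ² Σ_{j ∈ J} ŵ_j². -/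
/-!
Write `c(h)ᵢ(t) = h(Xᵢ) - h̄_Y(t)`. It is linear in `h`, bounded and measurable in `t`, and satisfies
`∑ᵢ c(h)ᵢ(t) Yⁱ(t) = 0` on `[0, 1]`. The last identity removes `λ₀` (and any other function of `t`
alone) from the compensator, so the risk is a quadratic form plus noise,
`Rₙ(b) = ‖h_b‖ₙ² - 2⟨h_b, h₀⟩ₙ - 2 ∑ⱼ bⱼ Zⱼ` (`riskRn_eq`).

With `δ = β̂ - β`, comparing `β̂` with `β̂ - sδ ∈ B` and letting `s → 0` gives the first-order condition
`2⟨h_δ, h_β̂ - h₀⟩ₙ - 2 ∑ⱼ δⱼ Zⱼ + 2 pen(β̂) - 2 pen(β) ≤ 0`. By polarization, and because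
`2|Zⱼ| ≤ ŵⱼ` and `β` vanishes off `J`, this becomes
`‖h_β̂ - h₀‖ₙ² - ‖h_β - h₀‖ₙ² + ‖h_δ‖ₙ² ≤ 3|δ_J|_{1,ŵ} - |δ_{J^∁}|_{1,ŵ}`.
If the difference of squared norms is positive, `δ` lies in the cone, so Cauchy-Schwarz and the
restricted-eigenvalue bound give `3|δ_J|_{1,ŵ} ≤ 3 (∑_J ŵⱼ²)^{1/2} μ ‖h_δ‖ₙ`, and completing the
square in `‖h_δ‖ₙ` finishes the argument.
-/

open MeasureTheory Finset

/-- Empirical mean of `h` over the at-risk individuals at time `t`: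
`h̄_Y(t) = (∑ᵢ h(Xᵢ) Yᵢ(t)) / (∑ᵢ Yᵢ(t))`. -/
noncomputable def hbar {n d : ℕ} (X : Fin n → (Fin d → ℝ)) (Y : Fin n → ℝ → ℝ)
    (h : (Fin d → ℝ) → ℝ) (t : ℝ) : ℝ :=
  (∑ i, h (X i) * Y i t) / (∑ i, Y i t)

/-- Empirical inner product `⟨g, h⟩ₙ`. -/
noncomputable def empInner {n d : ℕ} (X : Fin n → (Fin d → ℝ)) (Y : Fin n → ℝ → ℝ)
    (g h : (Fin d → ℝ) → ℝ) : ℝ :=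
  (1 / (n : ℝ)) * ∑ i, ∫ t in (0:ℝ)..1,
    (g (X i) - hbar X Y g t) * (h (X i) - hbar X Y h t) * Y i t

/-- Empirical squared norm `‖h‖ₙ²`. -/
noncomputable def empNormSq {n d : ℕ} (X : Fin n → (Fin d → ℝ)) (Y : Fin n → ℝ → ℝ)
    (h : (Fin d → ℝ) → ℝ) : ℝ := empInner X Y h h

/-- The linear combination `h_β = ∑ⱼ βⱼ hⱼ` over the dictionary. -/
noncomputable def hlin {M d : ℕ} (hdic : Fin M → (Fin d → ℝ) → ℝ) (β : Fin M → ℝ) :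
    (Fin d → ℝ) → ℝ := fun x => ∑ j, β j * hdic j x

/-- The least-squares risk `Rₙ(β)`. -/
noncomputable def riskRn {n M d : ℕ} (X : Fin n → (Fin d → ℝ)) (Y : Fin n → ℝ → ℝ)
    (N : Fin n → Measure ℝ) (hdic : Fin M → (Fin d → ℝ) → ℝ) (β : Fin M → ℝ) : ℝ :=
  (1 / (n : ℝ)) * ∑ i, ∫ t in (0:ℝ)..1,
      (hlin hdic β (X i) - ∑ j, β j * hbar X Y (hdic j) t) ^ 2 * Y i t
  - (2 / (n : ℝ)) * ∑ i, ∫ t in Set.Icc (0:ℝ) 1,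
      (hlin hdic β (X i) - ∑ j, β j * hbar X Y (hdic j) t) ∂(N i)

/-- The noise vector `(Zₙ)ⱼ`. -/
noncomputable def noiseZ {n M d : ℕ} (X : Fin n → (Fin d → ℝ)) (Y : Fin n → ℝ → ℝ)
    (N : Fin n → Measure ℝ) (hdic : Fin M → (Fin d → ℝ) → ℝ)
    (lam0 : ℝ → ℝ) (h0 : (Fin d → ℝ) → ℝ) (j : Fin M) : ℝ :=
  (1 / (n : ℝ)) * ∑ i,
    ((∫ t in Set.Icc (0:ℝ) 1, (hdic j (X i) - hbar X Y (hdic j) t) ∂(N i)) -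
      ∫ t in (0:ℝ)..1, (hdic j (X i) - hbar X Y (hdic j) t) * (lam0 t + h0 (X i)) * Y i t)

/-- Weighted ℓ¹-penalty `pen(b) = ∑ⱼ ŵⱼ |bⱼ|`. -/
noncomputable def penW {M : ℕ} (w b : Fin M → ℝ) : ℝ := ∑ j, w j * |b j|

/-- Support of a vector, `J(β) = {j : βⱼ ≠ 0}`. -/
noncomputable def suppJ {M : ℕ} (β : Fin M → ℝ) : Finset (Fin M) :=
  Finset.univ.filter (fun j => β j ≠ 0)

/-- Restriction of a vector to a set of coordinates: `(b_J)ⱼ = bⱼ` if `j ∈ J`, else `0`. -/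
noncomputable def restr {M : ℕ} (J : Finset (Fin M)) (b : Fin M → ℝ) : Fin M → ℝ :=
  fun j => if j ∈ J then b j else 0

/-- The centered value `h(Xᵢ) - h̄_Y(t)`. -/
noncomputable def cent {n d : ℕ} (X : Fin n → (Fin d → ℝ)) (Y : Fin n → ℝ → ℝ)
    (h : (Fin d → ℝ) → ℝ) (i : Fin n) (t : ℝ) : ℝ := h (X i) - hbar X Y h t

section Centering

variable {n M d : ℕ} {X : Fin n → (Fin d → ℝ)} {Y : Fin n → ℝ → ℝ}

lemma hbar_hlin (hdic : Fin M → (Fin d → ℝ) → ℝ) (b : Fin M → ℝ) (t : ℝ) :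
    hbar X Y (hlin hdic b) t = ∑ j, b j * hbar X Y (hdic j) t := by
  simp only [hbar, hlin, Finset.sum_mul, mul_div_assoc', ← Finset.sum_div, Finset.mul_sum]
  rw [Finset.sum_comm]
  simp only [mul_assoc]

lemma cent_hlin (hdic : Fin M → (Fin d → ℝ) → ℝ) (b : Fin M → ℝ) (i : Fin n) (t : ℝ) :
    cent X Y (hlin hdic b) i t = ∑ j, b j * cent X Y (hdic j) i t := by
  simp only [cent, hbar_hlin, mul_sub, Finset.sum_sub_distrib, hlin]

lemma cent_add_mul (g h : (Fin d → ℝ) → ℝ) (s : ℝ) (i : Fin n) (t : ℝ) :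
    cent X Y (fun x => g x + s * h x) i t = cent X Y g i t + s * cent X Y h i t := by
  simp only [cent, hbar, add_mul, Finset.sum_add_distrib, mul_assoc, ← Finset.mul_sum]
  ring

lemma measurable_cent (hYmeas : ∀ i, Measurable (Y i)) (h : (Fin d → ℝ) → ℝ) (i : Fin n) :
    Measurable (cent X Y h i) := by
  unfold cent hbar
  fun_prop

lemma abs_hbar_le (hY : ∀ i t, 0 ≤ Y i t) (h : (Fin d → ℝ) → ℝ) (t : ℝ) :
    |hbar X Y h t| ≤ ∑ i, |h (X i)| := by
  have hS : 0 ≤ ∑ i, Y i t := Finset.sum_nonneg fun i _ => hY i t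
  rw [hbar, abs_div, abs_of_nonneg hS]
  refine div_le_of_le_mul₀ hS (Finset.sum_nonneg fun i _ => abs_nonneg _) ?_
  refine (Finset.abs_sum_le_sum_abs _ _).trans ?_
  rw [Finset.mul_sum]
  refine Finset.sum_le_sum fun i _ => ?_
  rw [abs_mul, abs_of_nonneg (hY i t)]
  exact mul_le_mul_of_nonneg_right
    (Finset.single_le_sum (f := fun i => |h (X i)|) (fun _ _ => abs_nonneg _) (Finset.mem_univ i))
    (hY i t)

lemma abs_cent_le (hY : ∀ i t, 0 ≤ Y i t) (h : (Fin d → ℝ) → ℝ) (i : Fin n) (t : ℝ) :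
    |cent X Y h i t| ≤ |h (X i)| + ∑ i, |h (X i)| :=
  (abs_sub _ _).trans (add_le_add_right (abs_hbar_le hY h t) _)

lemma sum_cent_mul {t : ℝ} (ht : 0 < ∑ i, Y i t) (h : (Fin d → ℝ) → ℝ) :
    ∑ i, cent X Y h i t * Y i t = 0 := by
  simp only [cent, sub_mul, Finset.sum_sub_distrib, ← Finset.mul_sum]
  rw [hbar, div_mul_cancel₀ _ ht.ne', sub_self]

/-- The centered values are integrable against any finite measure. -/
lemma integrable_cent (hYmeas : ∀ i, Measurable (Y i)) (hY : ∀ i t, 0 ≤ Y i t)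
    (ν : Measure ℝ) [IsFiniteMeasure ν] (h : (Fin d → ℝ) → ℝ) (i : Fin n) :
    Integrable (cent X Y h i) ν :=
  Integrable.of_bound (measurable_cent hYmeas h i).aestronglyMeasurable _
    (Filter.Eventually.of_forall fun t => abs_cent_le hY h i t)

/-- Multiplication by `c(h)ᵢ` and by `Yⁱ`, both bounded, preserves integrability on `[0, 1]`. -/
lemma intervalIntegrable_cent_mul (hYmeas : ∀ i, Measurable (Y i))
    (hYrange : ∀ i t, Y i t ∈ Set.Icc (0:ℝ) 1) (h : (Fin d → ℝ) → ℝ) (i : Fin n)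
    {f : ℝ → ℝ} (hf : IntervalIntegrable f volume 0 1) :
    IntervalIntegrable (fun t => cent X Y h i t * f t * Y i t) volume 0 1 := by
  rw [intervalIntegrable_iff] at hf ⊢
  have h1 := hf.bdd_mul (measurable_cent (X := X) hYmeas h i).aestronglyMeasurable
    (Filter.Eventually.of_forall fun t => abs_cent_le (fun i t => (hYrange i t).1) h i t)
  refine h1.mul_bdd (c := 1) (hYmeas i).aestronglyMeasurable
    (Filter.Eventually.of_forall fun t => ?_)
  rw [Real.norm_eq_abs, abs_of_nonneg (hYrange i t).1]
  exact (hYrange i t).2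

lemma intervalIntegrable_cent_cent (hYmeas : ∀ i, Measurable (Y i))
    (hYrange : ∀ i t, Y i t ∈ Set.Icc (0:ℝ) 1) (g h : (Fin d → ℝ) → ℝ) (i : Fin n) :
    IntervalIntegrable (fun t => cent X Y g i t * cent X Y h i t * Y i t) volume 0 1 := by
  refine intervalIntegrable_cent_mul hYmeas hYrange g i ?_
  rw [intervalIntegrable_iff, Set.uIoc_of_le zero_le_one]
  exact integrable_cent hYmeas (fun i t => (hYrange i t).1) _ h i

end Centering

section InnerProduct

variable {n M d : ℕ} {X : Fin n → (Fin d → ℝ)} {Y : Fin n → ℝ → ℝ}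

lemma empInner_eq (g h : (Fin d → ℝ) → ℝ) :
    empInner X Y g h = (1 / (n : ℝ)) * ∑ i, ∫ t in (0:ℝ)..1,
      cent X Y g i t * cent X Y h i t * Y i t := rfl

lemma empInner_comm (g h : (Fin d → ℝ) → ℝ) : empInner X Y g h = empInner X Y h g := by
  simp only [empInner, mul_comm (g _ - _)]

lemma empInner_self_nonneg (hY : ∀ i t, 0 ≤ Y i t) (h : (Fin d → ℝ) → ℝ) :
    0 ≤ empInner X Y h h := by
  refine mul_nonneg (by positivity) (Finset.sum_nonneg fun i _ => ?_)
  exact intervalIntegral.integral_nonneg zero_le_one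
    fun t _ => mul_nonneg (mul_self_nonneg _) (hY i t)

lemma empInner_add_mul_left (hYmeas : ∀ i, Measurable (Y i))
    (hYrange : ∀ i t, Y i t ∈ Set.Icc (0:ℝ) 1) (g h k : (Fin d → ℝ) → ℝ) (s : ℝ) :
    empInner X Y (fun x => g x + s * h x) k = empInner X Y g k + s * empInner X Y h k := by
  have key : ∀ i, ∫ t in (0:ℝ)..1, cent X Y (fun x => g x + s * h x) i t * cent X Y k i t * Y i t
      = (∫ t in (0:ℝ)..1, cent X Y g i t * cent X Y k i t * Y i t)
        + s * ∫ t in (0:ℝ)..1, cent X Y h i t * cent X Y k i t * Y i t := by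
    intro i
    rw [← intervalIntegral.integral_const_mul, ← intervalIntegral.integral_add
      (intervalIntegrable_cent_cent hYmeas hYrange g k i)
      ((intervalIntegrable_cent_cent hYmeas hYrange h k i).const_mul s)]
    congr 1
    funext t
    rw [cent_add_mul]
    ring
  simp only [empInner_eq, key, Finset.sum_add_distrib, ← Finset.mul_sum]
  ring

lemma empInner_hlin_left (hYmeas : ∀ i, Measurable (Y i))
    (hYrange : ∀ i t, Y i t ∈ Set.Icc (0:ℝ) 1) (hdic : Fin M → (Fin d → ℝ) → ℝ)
    (b : Fin M → ℝ) (k : (Fin d → ℝ) → ℝ) :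
    empInner X Y (hlin hdic b) k = ∑ j, b j * empInner X Y (hdic j) k := by
  have key : ∀ i, ∫ t in (0:ℝ)..1, cent X Y (hlin hdic b) i t * cent X Y k i t * Y i t
      = ∑ j, b j * ∫ t in (0:ℝ)..1, cent X Y (hdic j) i t * cent X Y k i t * Y i t := by
    intro i
    simp only [← intervalIntegral.integral_const_mul]
    rw [← intervalIntegral.integral_finsetSum fun j _ =>
      (intervalIntegrable_cent_cent hYmeas hYrange (hdic j) k i).const_mul (b j)]
    congr 1
    funext t
    simp only [cent_hlin, Finset.sum_mul, mul_assoc]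
  simp only [empInner_eq, key]
  rw [Finset.sum_comm, Finset.mul_sum]
  refine Finset.sum_congr rfl fun j _ => ?_
  rw [← Finset.mul_sum]
  ring

/-- Since `∑ᵢ c(h)ᵢ Yⁱ = 0`, adding `λ₀(t) + h̄₀(t)` to the second factor does not change the
empirical inner product with `h₀`. -/
lemma empInner_eq_compensator (hYmeas : ∀ i, Measurable (Y i))
    (hYrange : ∀ i t, Y i t ∈ Set.Icc (0:ℝ) 1) (hYpos : ∀ t ∈ Set.Icc (0:ℝ) 1, 0 < ∑ i, Y i t)
    {lam0 : ℝ → ℝ} (hlam : IntervalIntegrable lam0 volume 0 1) (h h0 : (Fin d → ℝ) → ℝ) :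
    empInner X Y h h0 = (1 / (n : ℝ)) * ∑ i, ∫ t in (0:ℝ)..1,
      cent X Y h i t * (lam0 t + h0 (X i)) * Y i t := by
  rw [empInner_eq, ← intervalIntegral.integral_finsetSum fun i _ =>
      intervalIntegrable_cent_cent hYmeas hYrange h h0 i,
    ← intervalIntegral.integral_finsetSum fun i _ =>
      intervalIntegrable_cent_mul hYmeas hYrange h i (hlam.add intervalIntegrable_const)]
  congr 1
  refine intervalIntegral.integral_congr fun t ht => ?_
  rw [Set.uIcc_of_le zero_le_one] at ht
  have h1 : ∀ i, cent X Y h i t * (lam0 t + h0 (X i)) * Y i t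
      = cent X Y h i t * cent X Y h0 i t * Y i t
        + (lam0 t + hbar X Y h0 t) * (cent X Y h i t * Y i t) := by
    intro i
    rw [show cent X Y h0 i t = h0 (X i) - hbar X Y h0 t from rfl]
    ring
  simp only [h1, Finset.sum_add_distrib, ← Finset.mul_sum, sum_cent_mul (hYpos t ht), mul_zero,
    add_zero]

/-- The risk is a quadratic form in `h_b` minus twice the linear noise term. -/
lemma riskRn_eq (hn : 1 ≤ n) (hYmeas : ∀ i, Measurable (Y i))
    (hYrange : ∀ i t, Y i t ∈ Set.Icc (0:ℝ) 1) (hYpos : ∀ t ∈ Set.Icc (0:ℝ) 1, 0 < ∑ i, Y i t)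
    (N : Fin n → Measure ℝ) (hN : ∀ i, IsFiniteMeasure (N i)) (hdic : Fin M → (Fin d → ℝ) → ℝ)
    {lam0 : ℝ → ℝ} (hlam : IntervalIntegrable lam0 volume 0 1) (h0 : (Fin d → ℝ) → ℝ)
    (b : Fin M → ℝ) :
    riskRn X Y N hdic b = empInner X Y (hlin hdic b) (hlin hdic b)
      - 2 * empInner X Y (hlin hdic b) h0 - 2 * ∑ j, b j * noiseZ X Y N hdic lam0 h0 j := by
  have hY0 : ∀ i t, 0 ≤ Y i t := fun i t => (hYrange i t).1
  have hZ : ∀ j, noiseZ X Y N hdic lam0 h0 j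
      = (1 / (n : ℝ)) * (∑ i, ∫ t in Set.Icc (0:ℝ) 1, cent X Y (hdic j) i t ∂(N i))
        - empInner X Y (hdic j) h0 := by
    intro j
    rw [empInner_eq_compensator hYmeas hYrange hYpos hlam, ← mul_sub, ← Finset.sum_sub_distrib]
    rfl
  have hNint : ∑ i, ∫ t in Set.Icc (0:ℝ) 1, cent X Y (hlin hdic b) i t ∂(N i)
      = ∑ j, b j * ∑ i, ∫ t in Set.Icc (0:ℝ) 1, cent X Y (hdic j) i t ∂(N i) := by
    simp only [Finset.mul_sum]
    rw [Finset.sum_comm]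
    refine Finset.sum_congr rfl fun i _ => ?_
    have := hN i
    simp only [cent_hlin, ← integral_const_mul]
    exact integral_finsetSum _ fun j _ => (integrable_cent hYmeas hY0 _ (hdic j) i).const_mul (b j)
  have hR : riskRn X Y N hdic b = empInner X Y (hlin hdic b) (hlin hdic b)
      - (2 / (n : ℝ)) * ∑ i, ∫ t in Set.Icc (0:ℝ) 1, cent X Y (hlin hdic b) i t ∂(N i) := by
    -- In `riskRn` the counting term is in the scope of the outer sum and integral. It depends on
    -- neither variable, and averaging a constant over `n ≥ 1` unit intervals returns it.
    have hn0 : (n : ℝ) ≠ 0 := by exact_mod_cast (Nat.one_le_iff_ne_zero.1 hn)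
    have hC : ∀ C : ℝ, (1 / (n : ℝ)) * ∑ i, ∫ t in (0:ℝ)..1,
          (cent X Y (hlin hdic b) i t * cent X Y (hlin hdic b) i t * Y i t - C)
        = empInner X Y (hlin hdic b) (hlin hdic b) - C := by
      intro C
      simp only [intervalIntegral.integral_sub
        (intervalIntegrable_cent_cent hYmeas hYrange (hlin hdic b) (hlin hdic b) _)
        intervalIntegrable_const]
      rw [empInner_eq, Finset.sum_sub_distrib, mul_sub]
      simp [hn0]
    rw [← hC]
    simp only [riskRn, cent, hbar_hlin, sq]
  rw [hR, hNint, empInner_hlin_left hYmeas hYrange hdic b h0]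
  simp only [hZ, mul_sub, Finset.sum_sub_distrib, Finset.mul_sum]
  rw [sub_sub]
  congr 1
  rw [add_sub_cancel]
  refine Finset.sum_congr rfl fun j _ => Finset.sum_congr rfl fun i _ => ?_
  ring

end InnerProduct

lemma penW_restr {M : ℕ} (w b : Fin M → ℝ) (J : Finset (Fin M)) :
    penW w (restr J b) = ∑ j ∈ J, w j * |b j| := by
  simp only [penW, restr, apply_ite abs, abs_zero, mul_ite, mul_zero]
  simp

/-- **Theorem 2 (fast oracle inequality), deterministic core.**
On the event where `2 |(Zₙ)ⱼ| ≤ ŵⱼ` for all `j`, any minimizer `β̂` over a convex set `B`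
of `Rₙ(b) + 2 pen(b)` satisfies, for every `β ∈ B` with `J = J(β)` and every `μ > 0` with
`|b_J|₂ ≤ μ ‖h_b‖ₙ` for all `b` in the cone `{ |b_{J^∁}|₁,ŵ ≤ 3 |b_J|₁,ŵ }`:
`‖h_{β̂} − h₀‖ₙ² ≤ ‖h_β − h₀‖ₙ² + (9/4) μ² ∑_{j ∈ J} ŵⱼ²`. -/
theorem fast_oracle_inequality
    {n M d : ℕ} (hn : 1 ≤ n) (hM : 1 ≤ M) (hd1 : 1 ≤ d)
    (X : Fin n → (Fin d → ℝ)) (Y : Fin n → ℝ → ℝ)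
    (hYmeas : ∀ i, Measurable (Y i))
    (hYrange : ∀ i t, Y i t ∈ Set.Icc (0:ℝ) 1)
    (hYpos : ∀ t ∈ Set.Icc (0:ℝ) 1, 0 < ∑ i, Y i t)
    (N : Fin n → Measure ℝ) (hN : ∀ i, IsFiniteMeasure (N i))
    (hdic : Fin M → (Fin d → ℝ) → ℝ)
    (lam0 : ℝ → ℝ) (hlam_int : IntervalIntegrable lam0 volume 0 1)
    (hlam_nonneg : ∀ t, 0 ≤ lam0 t)
    (h0 : (Fin d → ℝ) → ℝ) (hh0 : ∀ x, 0 ≤ h0 x)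
    (w : Fin M → ℝ) (hw : ∀ j, 0 < w j)
    (hnoise : ∀ j, 2 * |noiseZ X Y N hdic lam0 h0 j| ≤ w j)
    (B : Set (Fin M → ℝ)) (hBconv : Convex ℝ B)
    (βhat : Fin M → ℝ) (hβhatB : βhat ∈ B)
    (hmin : ∀ b ∈ B,
      riskRn X Y N hdic βhat + 2 * penW w βhat ≤ riskRn X Y N hdic b + 2 * penW w b)
    (β : Fin M → ℝ) (hβB : β ∈ B) (μ : ℝ) (hμ : 0 < μ)
    (hRE : ∀ b : Fin M → ℝ,
      penW w (restr (suppJ β)ᶜ b) ≤ 3 * penW w (restr (suppJ β) b) →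
      Real.sqrt (∑ j ∈ suppJ β, (b j) ^ 2) ≤
        μ * Real.sqrt (empNormSq X Y (hlin hdic b))) :
    empNormSq X Y (fun x => hlin hdic βhat x - h0 x) ≤
      empNormSq X Y (fun x => hlin hdic β x - h0 x) +
        (9 / 4) * μ ^ 2 * ∑ j ∈ suppJ β, (w j) ^ 2 := by
  have hY0 : ∀ i t, 0 ≤ Y i t := fun i t => (hYrange i t).1
  set Z : Fin M → ℝ := noiseZ X Y N hdic lam0 h0 with hZdef
  set J := suppJ β with hJ
  set δ : Fin M → ℝ := βhat - β with hδ
  set D := empInner X Y (hlin hdic δ) (hlin hdic δ) with hD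
  have hD0 : 0 ≤ D := empInner_self_nonneg hY0 _
  have hR := riskRn_eq (X := X) hn hYmeas hYrange hYpos N hN hdic hlam_int h0
  have linL := fun g h k s => empInner_add_mul_left (X := X) hYmeas hYrange g h k s
  have linR : ∀ g h k s, empInner X Y k (fun x => g x + s * h x)
      = empInner X Y k g + s * empInner X Y k h := by
    intro g h k s
    rw [empInner_comm, linL, empInner_comm g, empInner_comm h]
  have hseg : ∀ s : ℝ, hlin hdic (β + s • δ) = fun x => hlin hdic β x + s * hlin hdic δ x := by
    intro s
    funext x
    simp only [hlin, Finset.mul_sum, ← Finset.sum_add_distrib, Pi.add_apply, Pi.smul_apply,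
      smul_eq_mul]
    exact Finset.sum_congr rfl fun j _ => by ring
  have hβhat : βhat = β + (1 : ℝ) • δ := by simp [hδ]
  have hpen : ∀ s : ℝ, 0 ≤ s → s ≤ 1 →
      penW w (β + s • δ) ≤ (1 - s) * penW w β + s * penW w βhat := by
    intro s hs0 hs1
    simp only [penW, Finset.mul_sum, ← Finset.sum_add_distrib]
    refine Finset.sum_le_sum fun j _ => ?_
    have h1 : (β + s • δ) j = (1 - s) * β j + s * βhat j := by
      simp only [hδ, Pi.add_apply, Pi.smul_apply, Pi.sub_apply, smul_eq_mul]
      ring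
    have h2 : |(β + s • δ) j| ≤ (1 - s) * |β j| + s * |βhat j| := by
      rw [h1]
      refine (abs_add_le _ _).trans ?_
      rw [abs_mul, abs_mul, abs_of_nonneg hs0, abs_of_nonneg (sub_nonneg.2 hs1)]
    nlinarith [mul_le_mul_of_nonneg_left h2 (hw j).le]
  set P := empInner X Y (hlin hdic β) (hlin hdic δ) with hP
  set Q := empInner X Y (hlin hdic δ) h0 with hQ
  have hRs : ∀ s : ℝ, riskRn X Y N hdic (β + s • δ) = riskRn X Y N hdic β
      + s * (2 * P - 2 * Q - 2 * ∑ j, δ j * Z j) + s ^ 2 * D := by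
    intro s
    have h1 : ∑ j, (β + s • δ) j * Z j = ∑ j, β j * Z j + s * ∑ j, δ j * Z j := by
      simp only [Finset.mul_sum, ← Finset.sum_add_distrib, Pi.add_apply, Pi.smul_apply,
        smul_eq_mul]
      exact Finset.sum_congr rfl fun j _ => by ring
    rw [hR, hR β, hseg, h1, linL, linL, linR, linR,
      empInner_comm (hlin hdic δ) (hlin hdic β)]
    ring
  -- The first-order condition, in the form "slope at `s = 1` along the segment from `β` to `β̂`".
  have hfoc : 2 * P - 2 * Q - 2 * ∑ j, δ j * Z j + 2 * D + 2 * penW w βhat - 2 * penW w β ≤ 0 := by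
    refine le_of_forall_pos_le_add fun ε hε => ?_
    obtain ⟨r, hr0, hr1, hrD⟩ : ∃ r : ℝ, 0 < r ∧ r ≤ 1 ∧ r * D ≤ ε := by
      refine ⟨min 1 (ε / (D + 1)), by positivity, min_le_left _ _, ?_⟩
      calc min 1 (ε / (D + 1)) * D ≤ ε / (D + 1) * (D + 1) :=
            mul_le_mul (min_le_right _ _) (by linarith) hD0 (by positivity)
        _ = ε := div_mul_cancel₀ _ (by positivity)
    have hmem : β + (1 - r) • δ ∈ B := by
      have h1 := hBconv hβB hβhatB hr0.le (sub_nonneg.2 hr1) (by ring)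
      convert h1 using 1
      funext j
      simp only [hδ, Pi.add_apply, Pi.smul_apply, Pi.sub_apply, smul_eq_mul]
      ring
    have h1 := hmin _ hmem
    have h2 := hpen (1 - r) (by linarith) (by linarith)
    have h3 := hRs 1
    rw [← hβhat] at h3
    rw [hRs, h3] at h1
    have h4 : r * (2 * P - 2 * Q - 2 * ∑ j, δ j * Z j + 2 * D + 2 * penW w βhat
        - 2 * penW w β) ≤ r * (r * D) := by nlinarith
    linarith [le_of_mul_le_mul_left h4 hr0]
  have hsub : ∀ g : (Fin d → ℝ) → ℝ, empNormSq X Y (fun x => g x - h0 x)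
      = empInner X Y g g - 2 * empInner X Y g h0 + empInner X Y h0 h0 := by
    intro g
    have h1 : (fun x => g x - h0 x) = fun x => g x + (-1) * h0 x := by
      funext x
      ring
    rw [empNormSq, h1, linL, linR, linR, empInner_comm h0 g]
    ring
  have hpol : empNormSq X Y (fun x => hlin hdic βhat x - h0 x)
      = empNormSq X Y (fun x => hlin hdic β x - h0 x) + 2 * P - 2 * Q + D := by
    rw [hsub, hsub, hβhat, hseg, linL, linL, linR, linR,
      empInner_comm (hlin hdic δ) (hlin hdic β)]
    ring
  -- Coordinatewise comparison of noise and penalties; off `J` one has `β j = 0`, `δ j = β̂ j`.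
  have hbound : 2 * (∑ j, δ j * Z j) + 2 * penW w β - 2 * penW w βhat
      ≤ 3 * (∑ j ∈ J, w j * |δ j|) - ∑ j ∈ Jᶜ, w j * |δ j| := by
    have hnz : ∀ j, 2 * (δ j * Z j) ≤ w j * |δ j| := fun j => by
      have h1 := le_abs_self (δ j * Z j)
      rw [abs_mul] at h1
      nlinarith [mul_le_mul_of_nonneg_left (hnoise j) (abs_nonneg (δ j))]
    have h1 : 2 * (∑ j, δ j * Z j) + 2 * penW w β - 2 * penW w βhat
        = ∑ j, (2 * (δ j * Z j) + 2 * (w j * |β j|) - 2 * (w j * |βhat j|)) := by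
      simp only [penW, Finset.mul_sum, Finset.sum_add_distrib, Finset.sum_sub_distrib]
    rw [h1, ← Finset.sum_add_sum_compl J, Finset.mul_sum, sub_eq_add_neg, ← Finset.sum_neg_distrib]
    refine add_le_add (Finset.sum_le_sum fun j _ => ?_) (Finset.sum_le_sum fun j hj => ?_)
    · have h2 : |β j| ≤ |δ j| + |βhat j| := by
        have h3 : β j = βhat j - δ j := by simp [hδ]
        rw [h3]
        exact (abs_sub _ _).trans (add_comm _ _).le
      nlinarith [hnz j, mul_le_mul_of_nonneg_left h2 (hw j).le]
    · have h2 : β j = 0 := by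
        simpa [hJ, suppJ] using hj
      have h3 : δ j = βhat j := by simp [hδ, h2]
      have h4 := hnz j
      rw [h2, abs_zero, ← h3]
      linarith
  have hW0 : 0 ≤ ∑ j ∈ J, (w j) ^ 2 := Finset.sum_nonneg fun j _ => sq_nonneg _
  by_cases hneg : 2 * P - 2 * Q + D ≤ 0
  · have : 0 ≤ (9 / 4) * μ ^ 2 * ∑ j ∈ J, (w j) ^ 2 := by positivity
    linarith
  · have hcone : penW w (restr Jᶜ δ) ≤ 3 * penW w (restr J δ) := by
      rw [penW_restr, penW_restr]
      linarith
    have hre := hRE δ hcone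
    rw [show empNormSq X Y (hlin hdic δ) = D from rfl] at hre
    have hcs : ∑ j ∈ J, w j * |δ j|
        ≤ √(∑ j ∈ J, (w j) ^ 2) * √(∑ j ∈ J, (δ j) ^ 2) := by
      simpa only [sq_abs] using Real.sum_mul_le_sqrt_mul_sqrt J w fun j => |δ j|
    have hcs' := hcs.trans (mul_le_mul_of_nonneg_left hre (Real.sqrt_nonneg _))
    have hc0 : 0 ≤ ∑ j ∈ Jᶜ, w j * |δ j| :=
      Finset.sum_nonneg fun j _ => mul_nonneg (hw j).le (abs_nonneg _)
    have hsD := Real.sq_sqrt hD0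
    have hsW := Real.sq_sqrt hW0
    -- `3ab - b² ≤ (9/4)a²` with `a = μ (∑ ŵⱼ²)^{1/2}` and `b = ‖h_δ‖ₙ`.
    have hsq := sq_nonneg (3 / 2 * (√(∑ j ∈ J, (w j) ^ 2) * μ) - √D)
    rw [← hsW]
    nlinarith
end

section
/- Let λ : [0,1] → [0,∞) be bounded measurable and h : ℝ^d → [0,∞), and define α(t,x) = λ(t) + h(x). Then the least-squares functional L_n(α) = (1/n) Σ_{i=1}^n ∫_0^1 α(t,X_i)² Y^i_t dt − (2/n) Σ_{i=1}^n ∫_0^1 α(t,X_i) dN^i(t) decomposes as L_n(α) = L_{n,1}(λ) + L_{n,2}(h), where L_{n,1}(λ) = (1/n) Σ_i ∫_0^1 (λ(t) + h̄_Y(t))² Y^i_t dt − (2/n) Σ_i ∫_0^1 (λ(t) + h̄_Y(t)) dN^i(t) and L_{n,2}(h) = (1/n) Σ_i ∫_0^1 (h(X_i) − h̄_Y(t))² Y^i_t dt − (2/n) Σ_i ∫_0^1 (h(X_i) − h̄_Y(t)) dN^i(t); that is, the cross term L_{n,3}(λ,h) = (2/n) Σ_i ∫_0^1 (λ(t) +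 h̄_Y(t))(h(X_i) − h̄_Y(t)) Y^i_t dt vanishes. -/
/-!
At each time `t` with `∑ᵢ Yᵢ(t) > 0`, the weighted mean `h̄_Y(t)` satisfies
`∑ᵢ (h(Xᵢ) - h̄_Y(t)) Yᵢ(t) = 0` (`sum_sub_hbar_mul`). Writing
`λ + h(Xᵢ) = (λ + h̄_Y) + (h(Xᵢ) - h̄_Y)` and expanding the square, the cross term therefore
vanishes pointwise after summing over `i` (`sum_sq_decomp`), while the terms linear in `α` split
by additivity. Both splittings pass through the integrals because `h̄_Y` is measurable and bounded
by `∑ᵢ h(Xᵢ)` (`hbar_le`). As the theorem is parsed, the `N`-terms stand inside the time integrals;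
`mean_integral_sub_const` shows that this does not change the value.
-/

open MeasureTheory Finset

lemma hbar_nonneg {n d : ℕ} (X : Fin n → (Fin d → ℝ)) (Y : Fin n → ℝ → ℝ)
    (hY : ∀ i t, 0 ≤ Y i t) (h : (Fin d → ℝ) → ℝ) (hh : ∀ x, 0 ≤ h x) (t : ℝ) :
    0 ≤ hbar X Y h t :=
  div_nonneg (Finset.sum_nonneg fun i _ => mul_nonneg (hh _) (hY i t))
    (Finset.sum_nonneg fun i _ => hY i t)

/-- Holds for every `t`: when `∑ᵢ Yᵢ(t) = 0`, the convention `x / 0 = 0` gives `h̄_Y(t) = 0`. -/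
lemma hbar_le {n d : ℕ} (X : Fin n → (Fin d → ℝ)) (Y : Fin n → ℝ → ℝ)
    (hY : ∀ i t, 0 ≤ Y i t) (h : (Fin d → ℝ) → ℝ) (hh : ∀ x, 0 ≤ h x) (t : ℝ) :
    hbar X Y h t ≤ ∑ i, h (X i) := by
  refine div_le_of_le_mul₀ (Finset.sum_nonneg fun i _ => hY i t)
    (Finset.sum_nonneg fun i _ => hh _) ?_
  rw [Finset.mul_sum]
  refine Finset.sum_le_sum fun i _ => mul_le_mul_of_nonneg_right ?_ (hY i t)
  exact Finset.single_le_sum (f := fun j => h (X j)) (fun j _ => hh _) (Finset.mem_univ i)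

lemma measurable_hbar {n d : ℕ} (X : Fin n → (Fin d → ℝ)) (Y : Fin n → ℝ → ℝ)
    (hY : ∀ i, Measurable (Y i)) (h : (Fin d → ℝ) → ℝ) : Measurable (hbar X Y h) := by
  unfold hbar
  fun_prop

lemma sum_sub_hbar_mul {n d : ℕ} (X : Fin n → (Fin d → ℝ)) (Y : Fin n → ℝ → ℝ)
    (h : (Fin d → ℝ) → ℝ) (t : ℝ) (ht : 0 < ∑ i, Y i t) :
    ∑ i, (h (X i) - hbar X Y h t) * Y i t = 0 := by
  simp only [sub_mul, Finset.sum_sub_distrib, ← Finset.mul_sum]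
  rw [hbar, div_mul_cancel₀ _ ht.ne', sub_self]

lemma sum_sq_decomp {n d : ℕ} (X : Fin n → (Fin d → ℝ)) (Y : Fin n → ℝ → ℝ)
    (h : (Fin d → ℝ) → ℝ) (t l : ℝ) (ht : 0 < ∑ i, Y i t) :
    ∑ i, (l + h (X i)) ^ 2 * Y i t =
      ∑ i, (l + hbar X Y h t) ^ 2 * Y i t + ∑ i, (h (X i) - hbar X Y h t) ^ 2 * Y i t := by
  have key : ∑ i, 2 * (l + hbar X Y h t) * ((h (X i) - hbar X Y h t) * Y i t) = 0 := by
    rw [← Finset.mul_sum, sum_sub_hbar_mul X Y h t ht, mul_zero]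
  rw [← add_zero (_ + _), ← key, ← Finset.sum_add_distrib, ← Finset.sum_add_distrib]
  exact Finset.sum_congr rfl fun i _ => by ring

/-- In `risk_decomposition` the body of each interval integral extends over the subtracted
`N`-term, which is constant in `t` and in the outer index. Averaging over `i` and over the unit
interval leaves such a constant unchanged, so it can be pulled out; this uses `1 ≤ n`. -/
lemma mean_integral_sub_const {n : ℕ} (hn : 1 ≤ n) (f : Fin n → ℝ → ℝ) (c : ℝ)
    (hf : ∀ i, IntervalIntegrable (f i) volume 0 1) :
    (1 / (n : ℝ)) * ∑ i, ∫ t in (0:ℝ)..1, (f i t - c) =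
      (1 / (n : ℝ)) * (∑ i, ∫ t in (0:ℝ)..1, f i t) - c := by
  have hn0 : (n : ℝ) ≠ 0 := by exact_mod_cast (Nat.one_le_iff_ne_zero.mp hn)
  have step : ∀ i, ∫ t in (0:ℝ)..1, (f i t - c) = (∫ t in (0:ℝ)..1, f i t) - c := fun i => by
    rw [intervalIntegral.integral_sub (hf i) intervalIntegrable_const]
    simp
  simp_rw [step]
  rw [Finset.sum_sub_distrib, Finset.sum_const, Finset.card_univ, Fintype.card_fin, nsmul_eq_mul]
  field_simp

/-- **Decomposition of the least-squares risk (equation (decomp)).**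
For `α(t,x) = λ(t) + h(x)`, the least-squares functional `Lₙ(α)` decomposes as
`Lₙ(α) = L_{n,1}(λ) + L_{n,2}(h)`; the cross term `L_{n,3}(λ,h)` vanishes. -/
theorem risk_decomposition
    {n d : ℕ} (hn : 1 ≤ n) (hd1 : 1 ≤ d)
    (X : Fin n → (Fin d → ℝ)) (Y : Fin n → ℝ → ℝ)
    (hYmeas : ∀ i, Measurable (Y i))
    (hYrange : ∀ i t, Y i t ∈ Set.Icc (0:ℝ) 1)
    (hYpos : ∀ t ∈ Set.Icc (0:ℝ) 1, 0 < ∑ i, Y i t)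
    (N : Fin n → Measure ℝ) (hN : ∀ i, IsFiniteMeasure (N i))
    (lam : ℝ → ℝ) (hlam_meas : Measurable lam) (hlam_nonneg : ∀ t, 0 ≤ lam t)
    (C : ℝ) (hlam_bdd : ∀ t, lam t ≤ C)
    (h : (Fin d → ℝ) → ℝ) (hh : ∀ x, 0 ≤ h x) :
    -- Lₙ(α) with α(t,x) = λ(t) + h(x)
    ((1 / (n : ℝ)) * ∑ i, ∫ t in (0:ℝ)..1, (lam t + h (X i)) ^ 2 * Y i t
      - (2 / (n : ℝ)) * ∑ i, ∫ t in Set.Icc (0:ℝ) 1, (lam t + h (X i)) ∂(N i))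
    = -- L_{n,1}(λ)
    ((1 / (n : ℝ)) * ∑ i, ∫ t in (0:ℝ)..1, (lam t + hbar X Y h t) ^ 2 * Y i t
      - (2 / (n : ℝ)) * ∑ i, ∫ t in Set.Icc (0:ℝ) 1, (lam t + hbar X Y h t) ∂(N i))
    + -- L_{n,2}(h)
    ((1 / (n : ℝ)) * ∑ i, ∫ t in (0:ℝ)..1, (h (X i) - hbar X Y h t) ^ 2 * Y i t
      - (2 / (n : ℝ)) * ∑ i, ∫ t in Set.Icc (0:ℝ) 1, (h (X i) - hbar X Y h t) ∂(N i)) := by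
  have hY0 : ∀ i t, 0 ≤ Y i t := fun i t => (hYrange i t).1
  have hbm : Measurable (hbar X Y h) := measurable_hbar X Y hYmeas h
  set B := ∑ i, h (X i) with hB
  have hb0 := hbar_nonneg X Y hY0 h hh
  have hbB := hbar_le X Y hY0 h hh
  rw [← hB] at hbB
  have hXB : ∀ i, h (X i) ≤ B := fun i =>
    Finset.single_le_sum (f := fun j => h (X j)) (fun j _ => hh _) (Finset.mem_univ i)
  have bdd_int : ∀ (μ : Measure ℝ) [IsFiniteMeasure μ] (f : ℝ → ℝ) (M : ℝ), Measurable f →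
      (∀ t, |f t| ≤ M) → Integrable f μ := fun μ _ f M hf hM =>
    Integrable.of_bound hf.aestronglyMeasurable M (Filter.Eventually.of_forall hM)
  have sq_int : ∀ (i : Fin n) (f : ℝ → ℝ) (M : ℝ), Measurable f → (∀ t, |f t| ≤ M) →
      IntervalIntegrable (fun t => f t ^ 2 * Y i t) volume 0 1 := by
    intro i f M hf hM
    rw [intervalIntegrable_iff_integrableOn_Ioc_of_le zero_le_one]
    refine bdd_int _ _ (M ^ 2) ((hf.pow_const 2).mul (hYmeas i)) fun t => ?_
    rw [abs_of_nonneg (mul_nonneg (sq_nonneg _) (hY0 i t))]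
    calc f t ^ 2 * Y i t ≤ f t ^ 2 * 1 :=
          mul_le_mul_of_nonneg_left (hYrange i t).2 (sq_nonneg _)
      _ = |f t| ^ 2 := by rw [mul_one, sq_abs]
      _ ≤ M ^ 2 := pow_le_pow_left₀ (abs_nonneg _) (hM t) 2
  have m1 : ∀ i, Measurable fun t => lam t + h (X i) := fun i => hlam_meas.add_const _
  have m2 : Measurable fun t => lam t + hbar X Y h t := hlam_meas.add hbm
  have m3 : ∀ i, Measurable fun t => h (X i) - hbar X Y h t := fun i => hbm.const_sub _
  have b1 : ∀ i t, |lam t + h (X i)| ≤ C + B := fun i t => by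
    rw [abs_of_nonneg (add_nonneg (hlam_nonneg t) (hh _))]
    exact add_le_add (hlam_bdd t) (hXB i)
  have b2 : ∀ t, |lam t + hbar X Y h t| ≤ C + B := fun t => by
    rw [abs_of_nonneg (add_nonneg (hlam_nonneg t) (hb0 t))]
    exact add_le_add (hlam_bdd t) (hbB t)
  have b3 : ∀ i t, |h (X i) - hbar X Y h t| ≤ B := fun i t => by
    rw [abs_le]
    constructor <;> linarith [hb0 t, hbB t, hXB i, hh (X i)]
  have i1 := fun i => sq_int i _ _ (m1 i) (b1 i)
  have i2 := fun i => sq_int i _ _ m2 b2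
  have i3 := fun i => sq_int i _ _ (m3 i) (b3 i)
  have quad : ∑ i, ∫ t in (0:ℝ)..1, (lam t + h (X i)) ^ 2 * Y i t =
      ∑ i, (∫ t in (0:ℝ)..1, (lam t + hbar X Y h t) ^ 2 * Y i t) +
        ∑ i, ∫ t in (0:ℝ)..1, (h (X i) - hbar X Y h t) ^ 2 * Y i t := by
    rw [← Finset.sum_add_distrib, ← intervalIntegral.integral_finsetSum fun i _ => i1 i]
    simp_rw [← fun i => intervalIntegral.integral_add (i2 i) (i3 i)]
    rw [← intervalIntegral.integral_finsetSum fun i _ => (i2 i).add (i3 i)]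
    refine intervalIntegral.integral_congr fun t ht => ?_
    rw [Set.uIcc_of_le zero_le_one] at ht
    simp only [Finset.sum_add_distrib]
    exact sum_sq_decomp X Y h t (lam t) (hYpos t ht)
  have lin : ∑ i, ∫ t in Set.Icc (0:ℝ) 1, (lam t + h (X i)) ∂(N i) =
      ∑ i, (∫ t in Set.Icc (0:ℝ) 1, (lam t + hbar X Y h t) ∂(N i)) +
        ∑ i, ∫ t in Set.Icc (0:ℝ) 1, (h (X i) - hbar X Y h t) ∂(N i) := by
    rw [← Finset.sum_add_distrib]
    refine Finset.sum_congr rfl fun i _ => ?_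
    have := hN i
    rw [← integral_add (bdd_int _ _ _ m2 b2) (bdd_int _ _ _ (m3 i) (b3 i))]
    refine integral_congr_ae (Filter.Eventually.of_forall fun t => ?_)
    ring
  rw [mean_integral_sub_const hn _ _ i1, mean_integral_sub_const hn _ _ i2,
    mean_integral_sub_const hn _ _ i3, quad, lin]
  ring
end
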